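/- Let f : ℝ^D × ℝ^{d'} → ℝ be ℓ-Lipschitz smooth, and for α > 0 define the partially smoothed function f_α(x, y) := E_v[f(x + αv, y)], where v is uniformly distributed on the closed Euclidean ball of radius √D centered at the origin in ℝ^D. Fix x ∈ ℝ^D, suppose y ↦ f(x, y) has a unique maximizer y*(x), set g(x) := f(x, y*(x)), and assume g is differentiable at x with ∇g(x) = ∇_x f(x, y*(x)). Then for all ζ > 0, γ > 0 and y ∈ ℝ^{d'}: −ζ·⟨∇g(x), ∇_x f_α(x, y)⟩ ≤ α²ℓD³/(4γ) + (ℓ/γ)·‖y*(x) − y‖² + (ζ²ℓγ/2 − ζ)·‖∇_x f_α(x, y)‖². -/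

import Mathlib

open MeasureTheory Metric RealInnerProductSpace

/-- The uniform probability measure on the closed Euclidean ball of radius `√D`
centered at the origin in `ℝ^D`. -/
noncomputable def uniformBall (D : ℕ) : Measure (EuclideanSpace ℝ (Fin D)) :=
  (volume (closedBall (0 : EuclideanSpace ℝ (Fin D)) (Real.sqrt D)))⁻¹ •
    volume.restrict (closedBall (0 : EuclideanSpace ℝ (Fin D)) (Real.sqrt D))

/-- `ℝ^D × ℝ^{d'}` with the Euclidean (`L²`) product norm. -/
abbrev EuclideanProd (D d' : ℕ) :=
  WithLp 2 (EuclideanSpace ℝ (Fin D) × EuclideanSpace ℝ (Fin d'))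

/-- The point of `ℝ^D × ℝ^{d'}` (with the Euclidean product norm) with components `x, y`. -/
noncomputable def euclidPair {D d' : ℕ} (x : EuclideanSpace ℝ (Fin D))
    (y : EuclideanSpace ℝ (Fin d')) : EuclideanProd D d' :=
  (WithLp.equiv 2 (EuclideanSpace ℝ (Fin D) × EuclideanSpace ℝ (Fin d'))).symm (x, y)

/-!
Let `u = ∇ₓ f (x, y*(x))`, which is `∇g(x)`, and `w = ∇ₓ f_α (x, y)`. Expanding
`0 ≤ ‖(u - w) + ζℓγ w‖²` and dividing by `2ℓγ` bounds `-ζ⟪u, w⟫` by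
`‖u - w‖² / (2ℓγ) + (ζ²ℓγ/2 - ζ)‖w‖²`. Smoothing in `x` commutes with `∇ₓ`, so `w` is the average
of `∇ₓ f (x + αv, y)`, and Lipschitz smoothness gives `‖u - w‖ ≤ ℓ (α E‖v‖ + ‖y*(x) - y‖)`. In
polar coordinates `E‖v‖ = √D · D / (D + 1)`, which is at most `√D · D / 2`, whence the constant
`D³ / 4`.
-/

open InnerProductSpace Module WithLp
open scoped NNReal

/-- The smoothing `x ↦ E_v [h (x + α v)]`, `v ∼ μ`, of `h` at scale `α`. The function `f_α (·, y)`
is `randomizedSmoothing (uniformBall D) α (fun x ↦ f (euclidPair x y))`. -/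
noncomputable def randomizedSmoothing {E G : Type*} [AddCommGroup E] [Module ℝ E]
    [MeasurableSpace E] [NormedAddCommGroup G] [NormedSpace ℝ G] (μ : Measure E) (α : ℝ)
    (h : E → G) (x : E) : G :=
  ∫ v, h (x + α • v) ∂μ

section Smoothing

variable {E G : Type*} [NormedAddCommGroup E] [NormedSpace ℝ E] [NormedAddCommGroup G] {ℓ : ℝ≥0}

lemma norm_sub_comp_add_smul_le {φ : E → G} (hφ : LipschitzWith ℓ φ) (α : ℝ) (x v : E) :
    ‖φ x - φ (x + α • v)‖ ≤ ℓ * (|α| * ‖v‖) := by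
  simpa [norm_smul] using hφ.norm_sub_le x (x + α • v)

variable [MeasurableSpace E] {μ : Measure E}

lemma aestronglyMeasurable_comp_add_smul {φ : E → G} (hφ : Continuous φ)
    (hμ : AEStronglyMeasurable (fun v ↦ v) μ) (α : ℝ) (x : E) :
    AEStronglyMeasurable (fun v ↦ φ (x + α • v)) μ :=
  hφ.comp_aestronglyMeasurable ((hμ.const_smul α).const_add x)

lemma integrable_comp_add_smul [IsFiniteMeasure μ] {φ : E → G} (hφ : LipschitzWith ℓ φ)
    (hμ : Integrable (fun v ↦ v) μ) (α : ℝ) (x : E) :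
    Integrable (fun v ↦ φ (x + α • v)) μ := by
  have hdiff : Integrable (fun v ↦ φ x - φ (x + α • v)) μ :=
    ((hμ.norm.const_mul |α|).const_mul (ℓ : ℝ)).mono'
      (aestronglyMeasurable_const.sub
        (aestronglyMeasurable_comp_add_smul hφ.continuous hμ.aestronglyMeasurable α x))
      (.of_forall (norm_sub_comp_add_smul_le hφ α x))
  simpa only [Pi.sub_def, sub_sub_cancel] using (integrable_const (φ x)).sub hdiff

variable [NormedSpace ℝ G]

theorem norm_sub_randomizedSmoothing_le [IsProbabilityMeasure μ] [CompleteSpace G] {φ : E → G}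
    (hφ : LipschitzWith ℓ φ) (hμ : Integrable (fun v ↦ v) μ) (α : ℝ) (x : E) :
    ‖φ x - randomizedSmoothing μ α φ x‖ ≤ ℓ * (|α| * ∫ v, ‖v‖ ∂μ) :=
  calc ‖φ x - randomizedSmoothing μ α φ x‖
      = ‖∫ v, (φ x - φ (x + α • v)) ∂μ‖ := by
        rw [integral_sub (integrable_const _) (integrable_comp_add_smul hφ hμ α x)]
        simp [randomizedSmoothing]
    _ ≤ ∫ v, ℓ * (|α| * ‖v‖) ∂μ :=
        norm_integral_le_of_norm_le ((hμ.norm.const_mul _).const_mul _)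
          (.of_forall (norm_sub_comp_add_smul_le hφ α x))
    _ = ℓ * (|α| * ∫ v, ‖v‖ ∂μ) := by rw [integral_const_mul, integral_const_mul]

theorem hasFDerivAt_randomizedSmoothing [IsFiniteMeasure μ] {h : E → G} (hh : Differentiable ℝ h)
    (hlip : LipschitzWith ℓ (fderiv ℝ h)) (hμ : Integrable (fun v ↦ v) μ) {α : ℝ} {x : E}
    (hint : Integrable (fun v ↦ h (x + α • v)) μ) :
    HasFDerivAt (randomizedSmoothing μ α h) (randomizedSmoothing μ α (fderiv ℝ h) x) x := by
  have hbound (v x' : E) (hx' : x' ∈ ball x 1) :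
      ‖fderiv ℝ h (x' + α • v)‖ ≤ ‖fderiv ℝ h (x + α • v)‖ + ℓ := by
    have hdist : ‖fderiv ℝ h (x' + α • v) - fderiv ℝ h (x + α • v)‖ ≤ ℓ * ‖x' - x‖ := by
      simpa using hlip.norm_sub_le (x' + α • v) (x + α • v)
    have hball : ℓ * ‖x' - x‖ ≤ ℓ :=
      mul_le_of_le_one_right ℓ.2 (mem_ball_iff_norm.1 hx').le
    linarith [norm_le_norm_add_norm_sub' (fderiv ℝ h (x' + α • v)) (fderiv ℝ h (x + α • v))]
  exact hasFDerivAt_integral_of_dominated_of_fderiv_le (ball_mem_nhds x one_pos)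
    (.of_forall (aestronglyMeasurable_comp_add_smul hh.continuous hμ.aestronglyMeasurable α))
    hint (aestronglyMeasurable_comp_add_smul hlip.continuous hμ.aestronglyMeasurable α x)
    (.of_forall hbound)
    ((integrable_comp_add_smul hlip hμ α x).norm.add (integrable_const (ℓ : ℝ)))
    (.of_forall fun v x' _ ↦ (hasFDerivAt_comp_add_right (α • v)).2 (hh (x' + α • v)).hasFDerivAt)

end Smoothing

section Gradient

variable {E F : Type*} [NormedAddCommGroup E] [InnerProductSpace ℝ E] [CompleteSpace E]
  [NormedAddCommGroup F] [InnerProductSpace ℝ F] [CompleteSpace F] {ℓ : ℝ≥0}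

theorem hasGradientAt_randomizedSmoothing [MeasurableSpace E] {μ : Measure E}
    [IsFiniteMeasure μ] {h : E → ℝ} (hh : Differentiable ℝ h) (hlip : LipschitzWith ℓ (gradient h))
    (hμ : Integrable (fun v ↦ v) μ) {α : ℝ} {x : E}
    (hint : Integrable (fun v ↦ h (x + α • v)) μ) :
    HasGradientAt (randomizedSmoothing μ α h) (randomizedSmoothing μ α (gradient h) x) x := by
  have hfderiv : LipschitzWith ℓ (fderiv ℝ h) := by
    rw [← toDual_comp_gradient]
    simpa using (toDual ℝ E).lipschitz.comp hlip
  have hcomm : toDual ℝ E (randomizedSmoothing μ α (gradient h) x) =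
      randomizedSmoothing μ α (fderiv ℝ h) x := by
    simp only [randomizedSmoothing, ← toDual_gradient]
    exact ((toDual ℝ E).toLinearIsometry.integral_comp_comm _).symm
  rw [hasGradientAt_iff_hasFDerivAt, hcomm]
  exact hasFDerivAt_randomizedSmoothing hh hfderiv hμ hint

lemma hasGradientAt_comp_toLp_left {f : WithLp 2 (E × F) → ℝ} {x : E} {y : F}
    (hf : DifferentiableAt ℝ f (toLp 2 (x, y))) :
    HasGradientAt (fun x' ↦ f (toLp 2 (x', y))) (gradient f (toLp 2 (x, y))).fst x := by
  have hpair : HasFDerivAt (fun x' ↦ toLp 2 (x', y))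
      ((prodContinuousLinearEquiv 2 ℝ E F).symm.toContinuousLinearMap ∘L
        ContinuousLinearMap.inl ℝ E F) x :=
    ((prodContinuousLinearEquiv 2 ℝ E F).symm.hasFDerivAt).comp x (hasFDerivAt_prodMk_left x y)
  rw [hasGradientAt_iff_hasFDerivAt]
  refine (hf.hasFDerivAt.comp x hpair).congr_fderiv ?_
  ext u
  simp [← inner_gradient_left, prod_inner_apply]

lemma differentiable_comp_toLp_left {f : WithLp 2 (E × F) → ℝ} (hf : Differentiable ℝ f) (y : F) :
    Differentiable ℝ fun x ↦ f (toLp 2 (x, y)) :=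
  fun _ ↦ (hasGradientAt_comp_toLp_left (hf _)).differentiableAt

lemma norm_gradient_fst_sub_le {f : WithLp 2 (E × F) → ℝ} (hlip : LipschitzWith ℓ (gradient f))
    (z₁ z₂ : WithLp 2 (E × F)) :
    ‖(gradient f z₁).fst - (gradient f z₂).fst‖ ≤ ℓ * ‖z₁ - z₂‖ :=
  (norm_fst_le _ (gradient f z₁ - gradient f z₂)).trans (hlip.norm_sub_le z₁ z₂)

theorem norm_gradient_sub_gradient_randomizedSmoothing_le [MeasurableSpace E]
    {μ : Measure E} [IsProbabilityMeasure μ] {f : WithLp 2 (E × F) → ℝ} (hf : Differentiable ℝ f)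
    (hlip : LipschitzWith ℓ (gradient f)) (hμ : Integrable (fun v ↦ v) μ) {α : ℝ} {x : E} {y : F}
    (hint : Integrable (fun v ↦ f (toLp 2 (x + α • v, y))) μ) (y' : F) :
    ‖gradient (fun x' ↦ f (toLp 2 (x', y'))) x -
        gradient (randomizedSmoothing μ α fun x' ↦ f (toLp 2 (x', y))) x‖ ≤
      ℓ * (|α| * (∫ v, ‖v‖ ∂μ) + ‖y' - y‖) := by
  have hgrad (b : F) : gradient (fun x' ↦ f (toLp 2 (x', b))) =
      fun x' ↦ (gradient f (toLp 2 (x', b))).fst :=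
    gradient_eq fun x' ↦ hasGradientAt_comp_toLp_left (hf _)
  have hlip_left : LipschitzWith ℓ (gradient fun x' ↦ f (toLp 2 (x', y))) := by
    refine lipschitzWith_iff_norm_sub_le.2 fun a b ↦ ?_
    simpa [hgrad, ← toLp_sub] using
      norm_gradient_fst_sub_le hlip (toLp 2 (a, y)) (toLp 2 (b, y))
  have hright : ‖gradient (fun x' ↦ f (toLp 2 (x', y'))) x -
      gradient (fun x' ↦ f (toLp 2 (x', y))) x‖ ≤ ℓ * ‖y' - y‖ := by
    simpa [hgrad, ← toLp_sub] using
      norm_gradient_fst_sub_le hlip (toLp 2 (x, y')) (toLp 2 (x, y))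
  have hcomm := (hasGradientAt_randomizedSmoothing (differentiable_comp_toLp_left hf y) hlip_left
    hμ hint).gradient
  have hsmooth := norm_sub_randomizedSmoothing_le hlip_left hμ α x
  rw [← hcomm] at hsmooth
  linarith [norm_sub_le_norm_sub_add_norm_sub (gradient (fun x' ↦ f (toLp 2 (x', y'))) x)
    (gradient (fun x' ↦ f (toLp 2 (x', y))) x)
    (gradient (randomizedSmoothing μ α fun x' ↦ f (toLp 2 (x', y))) x)]

end Gradient

section Ball

open Set

theorem setIntegral_norm_closedBall {E : Type*} [NormedAddCommGroup E] [NormedSpace ℝ E]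
    [FiniteDimensional ℝ E] [MeasurableSpace E] [BorelSpace E] (μ : Measure E)
    [μ.IsAddHaarMeasure] {r : ℝ} (hr : 0 ≤ r) :
    ∫ v in closedBall (0 : E) r, ‖v‖ ∂μ =
      finrank ℝ E / (finrank ℝ E + 1) * r ^ (finrank ℝ E + 1) * μ.real (ball 0 1) := by
  rcases subsingleton_or_nontrivial E with hE | hE
  · simp [finrank_zero_of_subsingleton, Subsingleton.elim _ (0 : E)]
  have hradial (v : E) :
      (closedBall 0 r).indicator (fun v ↦ ‖v‖) v = (Iic r).indicator id ‖v‖ := by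
    simp [indicator]
  have hweight (t : ℝ) : t ^ (finrank ℝ E - 1) • (Iic r).indicator id t =
      (Iic r).indicator (fun t ↦ t ^ finrank ℝ E) t := by
    simp [indicator, ← pow_succ, Nat.sub_add_cancel (finrank_pos (R := ℝ) (M := E))]
  have hmoment : ∫ t in Ioi 0, (Iic r).indicator (fun t ↦ t ^ finrank ℝ E) t =
      r ^ (finrank ℝ E + 1) / (finrank ℝ E + 1) := by
    rw [setIntegral_indicator measurableSet_Iic, Ioi_inter_Iic,
      ← intervalIntegral.integral_of_le hr, integral_pow]
    simp
  calc ∫ v in closedBall (0 : E) r, ‖v‖ ∂μ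
      = ∫ v, (Iic r).indicator id ‖v‖ ∂μ := by
        rw [← integral_indicator measurableSet_closedBall]
        simp only [hradial]
    _ = finrank ℝ E • μ.real (ball 0 1) • (r ^ (finrank ℝ E + 1) / (finrank ℝ E + 1)) := by
        rw [integral_fun_norm_addHaar]
        simp only [hweight, hmoment]
    _ = finrank ℝ E / (finrank ℝ E + 1) * r ^ (finrank ℝ E + 1) * μ.real (ball 0 1) := by
        simp only [nsmul_eq_mul, smul_eq_mul]
        ring

lemma volume_closedBall_sqrt_ne_zero (D : ℕ) :
    volume (closedBall (0 : EuclideanSpace ℝ (Fin D)) √D) ≠ 0 := by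
  -- For `D = 0` the radius vanishes, but the ball is the whole space and `√0 ^ 0 = 1`.
  have hpow : (0 : ℝ) < √D ^ D := by
    rcases D.eq_zero_or_pos with rfl | hD
    · simp
    · positivity
  rw [Measure.addHaar_closedBall _ _ (Real.sqrt_nonneg _), finrank_euclideanSpace_fin]
  exact mul_ne_zero (ENNReal.ofReal_pos.2 hpow).ne' (measure_ball_pos _ _ one_pos).ne'

instance isProbabilityMeasure_uniformBall (D : ℕ) : IsProbabilityMeasure (uniformBall D) :=
  ProbabilityTheory.cond_isProbabilityMeasure_of_finite (volume_closedBall_sqrt_ne_zero D)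
    measure_closedBall_lt_top.ne

lemma integrable_uniformBall {D : ℕ} {G : Type*} [NormedAddCommGroup G]
    {φ : EuclideanSpace ℝ (Fin D) → G} (hφ : Continuous φ) : Integrable φ (uniformBall D) :=
  (hφ.continuousOn.integrableOn_compact (isCompact_closedBall _ _)).smul_measure
    (ENNReal.inv_ne_top.2 (volume_closedBall_sqrt_ne_zero D))

theorem integral_norm_uniformBall (D : ℕ) :
    ∫ v, ‖v‖ ∂(uniformBall D) = D / (D + 1) * √D := by
  have hvol := ENNReal.toReal_ne_zero.2
    ⟨volume_closedBall_sqrt_ne_zero D, measure_closedBall_lt_top.ne⟩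
  have hball := Measure.addHaar_real_closedBall
    (volume : Measure (EuclideanSpace ℝ (Fin D))) 0 (Real.sqrt_nonneg D)
  rw [measureReal_def, finrank_euclideanSpace_fin] at hball
  rw [uniformBall, integral_smul_measure, setIntegral_norm_closedBall _ (Real.sqrt_nonneg D),
    ENNReal.toReal_inv, smul_eq_mul, inv_mul_eq_iff_eq_mul₀ hvol, hball,
    finrank_euclideanSpace_fin]
  ring

-- Sharp for `D = 1`, the case in which the crude bound `‖v‖ ≤ √D` is not enough.
lemma four_mul_sq_integral_norm_uniformBall_le (D : ℕ) :
    4 * (∫ v, ‖v‖ ∂(uniformBall D)) ^ 2 ≤ (D : ℝ) ^ 3 := by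
  have hhalf : (D : ℝ) / (D + 1) ≤ D / 2 := by
    rcases D.eq_zero_or_pos with rfl | hD
    · simp
    · have : (1 : ℝ) ≤ D := mod_cast hD
      gcongr
      linarith
  calc 4 * (∫ v, ‖v‖ ∂(uniformBall D)) ^ 2
      ≤ 4 * (D / 2 * √D) ^ 2 := by
        rw [integral_norm_uniformBall]
        gcongr
    _ = (D : ℝ) ^ 3 := by
        rw [mul_pow, Real.sq_sqrt D.cast_nonneg]
        ring

end Ball

lemma neg_mul_inner_le_norm_sub_sq_div_add {E : Type*} [SeminormedAddCommGroup E]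
    [InnerProductSpace ℝ E] (u w : E) (ζ : ℝ) {c : ℝ} (hc : 0 < c) :
    -ζ * ⟪u, w⟫ ≤ ‖u - w‖ ^ 2 / (2 * c) + (ζ ^ 2 * c / 2 - ζ) * ‖w‖ ^ 2 := by
  have hsq : ‖(u - w) + (ζ * c) • w‖ ^ 2 =
      ‖u - w‖ ^ 2 + 2 * c * (ζ * ⟪u, w⟫ - ζ * ‖w‖ ^ 2 + ζ ^ 2 * c / 2 * ‖w‖ ^ 2) := by
    rw [norm_add_sq_real, inner_smul_right, inner_sub_left, real_inner_self_eq_norm_sq, norm_smul,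
      mul_pow, Real.norm_eq_abs, sq_abs]
    ring
  have hsplit : ‖u - w‖ ^ 2 / (2 * c) + (ζ ^ 2 * c / 2 - ζ) * ‖w‖ ^ 2 - -ζ * ⟪u, w⟫ =
      ‖(u - w) + (ζ * c) • w‖ ^ 2 / (2 * c) := by
    rw [hsq]
    field_simp
    ring
  exact sub_nonneg.1 (hsplit ▸ by positivity)

theorem stmt7_general {E F : Type*} [NormedAddCommGroup E] [InnerProductSpace ℝ E]
    [CompleteSpace E] [MeasurableSpace E] [NormedAddCommGroup F]
    [InnerProductSpace ℝ F] [CompleteSpace F] {μ : Measure E} [IsProbabilityMeasure μ]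
    {M : ℝ} (hμ : Integrable (fun v ↦ v) μ) (hM : 4 * (∫ v, ‖v‖ ∂μ) ^ 2 ≤ M) {ℓ : ℝ} (hℓ : 0 < ℓ)
    {f : WithLp 2 (E × F) → ℝ} (hf : Differentiable ℝ f)
    (hlip : ∀ z₁ z₂, ‖gradient f z₁ - gradient f z₂‖ ≤ ℓ * ‖z₁ - z₂‖) {x : E} {ystar : E → F}
    (hg : HasGradientAt (fun x' ↦ f (toLp 2 (x', ystar x')))
      (gradient (fun x' ↦ f (toLp 2 (x', ystar x))) x) x)
    {α : ℝ} {y : F} (hint : Integrable (fun v ↦ f (toLp 2 (x + α • v, y))) μ)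
    (ζ : ℝ) {γ : ℝ} (hγ : 0 < γ) :
    -ζ * ⟪gradient (fun x' ↦ f (toLp 2 (x', ystar x'))) x,
          gradient (randomizedSmoothing μ α fun x' ↦ f (toLp 2 (x', y))) x⟫ ≤
      α ^ 2 * ℓ * M / (4 * γ) + ℓ / γ * ‖ystar x - y‖ ^ 2 +
        (ζ ^ 2 * ℓ * γ / 2 - ζ) *
          ‖gradient (randomizedSmoothing μ α fun x' ↦ f (toLp 2 (x', y))) x‖ ^ 2 := by
  rw [hg.gradient]
  lift ℓ to ℝ≥0 using hℓ.le
  set u := gradient (fun x' ↦ f (toLp 2 (x', ystar x))) x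
  set w := gradient (randomizedSmoothing μ α fun x' ↦ f (toLp 2 (x', y))) x
  have hdist : ‖u - w‖ ^ 2 ≤ ℓ ^ 2 * (α ^ 2 * M / 2 + 2 * ‖ystar x - y‖ ^ 2) :=
    calc ‖u - w‖ ^ 2
        ≤ (ℓ * (|α| * (∫ v, ‖v‖ ∂μ) + ‖ystar x - y‖)) ^ 2 := by
          gcongr
          exact norm_gradient_sub_gradient_randomizedSmoothing_le hf
            (lipschitzWith_iff_norm_sub_le.2 hlip) hμ hint (ystar x)
      _ ≤ ℓ ^ 2 * (2 * ((|α| * ∫ v, ‖v‖ ∂μ) ^ 2 + ‖ystar x - y‖ ^ 2)) := by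
          rw [mul_pow]
          gcongr
          exact add_sq_le
      _ = ℓ ^ 2 * (α ^ 2 * (4 * (∫ v, ‖v‖ ∂μ) ^ 2) / 2 + 2 * ‖ystar x - y‖ ^ 2) := by
          rw [mul_pow |α|, sq_abs]
          ring
      _ ≤ ℓ ^ 2 * (α ^ 2 * M / 2 + 2 * ‖ystar x - y‖ ^ 2) := by gcongr
  calc -ζ * ⟪u, w⟫
      ≤ ‖u - w‖ ^ 2 / (2 * (ℓ * γ)) + (ζ ^ 2 * (ℓ * γ) / 2 - ζ) * ‖w‖ ^ 2 :=
        neg_mul_inner_le_norm_sub_sq_div_add u w ζ (by positivity)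
    _ ≤ ℓ ^ 2 * (α ^ 2 * M / 2 + 2 * ‖ystar x - y‖ ^ 2) / (2 * (ℓ * γ)) +
          (ζ ^ 2 * (ℓ * γ) / 2 - ζ) * ‖w‖ ^ 2 := by gcongr
    _ = α ^ 2 * ℓ * M / (4 * γ) + ℓ / γ * ‖ystar x - y‖ ^ 2 +
          (ζ ^ 2 * ℓ * γ / 2 - ζ) * ‖w‖ ^ 2 := by
        field_simp
        ring

/-- Let `f : ℝ^D × ℝ^{d'} → ℝ` be `ℓ`-Lipschitz smooth, let
`f_α (x, y) = E_v [f (x + α v, y)]` (`v` uniform on the ball of radius `√D` in `ℝ^D`), fix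
`x`, suppose `y ↦ f (x, y)` has a unique maximizer `y*(x)`, set `g x = f (x, y*(x))`, and
assume `g` is differentiable at `x` with `∇g(x) = ∇ₓ f (x, y*(x))`.  Then for all
`ζ, γ > 0` and all `y`,
`−ζ ⟪∇g(x), ∇ₓ f_α (x, y)⟫ ≤ α²ℓD³/(4γ) + (ℓ/γ)‖y*(x) − y‖² + (ζ²ℓγ/2 − ζ)‖∇ₓ f_α (x, y)‖²`. -/
theorem stmt7 (D d' : ℕ) (ℓ α : ℝ) (hℓ : 0 < ℓ) (hα : 0 < α)
    (f : EuclideanProd D d' → ℝ) (hdiff : Differentiable ℝ f)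
    (hlip : ∀ z₁ z₂, ‖gradient f z₁ - gradient f z₂‖ ≤ ℓ * ‖z₁ - z₂‖)
    (x : EuclideanSpace ℝ (Fin D)) (ystar : EuclideanSpace ℝ (Fin D) → EuclideanSpace ℝ (Fin d'))
    (hmax : ∀ y, f (euclidPair x y) ≤ f (euclidPair x (ystar x)))
    (huniq : ∀ y', (∀ y, f (euclidPair x y) ≤ f (euclidPair x y')) → y' = ystar x)
    (hg : HasGradientAt (fun x' => f (euclidPair x' (ystar x')))
      (gradient (fun x' => f (euclidPair x' (ystar x))) x) x) :
    ∀ (ζ γ : ℝ) (y : EuclideanSpace ℝ (Fin d')), 0 < ζ → 0 < γ →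
      -ζ * ⟪gradient (fun x' => f (euclidPair x' (ystar x'))) x,
            gradient (fun x' => ∫ v, f (euclidPair (x' + α • v) y) ∂(uniformBall D)) x⟫
        ≤ α ^ 2 * ℓ * (D : ℝ) ^ 3 / (4 * γ) + ℓ / γ * ‖ystar x - y‖ ^ 2
          + (ζ ^ 2 * ℓ * γ / 2 - ζ) *
            ‖gradient (fun x' => ∫ v, f (euclidPair (x' + α • v) y) ∂(uniformBall D)) x‖ ^ 2 := by
  intro ζ γ y _ hγ
  exact stmt7_general (integrable_uniformBall continuous_id)
    (four_mul_sq_integral_norm_uniformBall_le D) hℓ hdiff hlip hg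
    (integrable_uniformBall ((differentiable_comp_toLp_left hdiff y).continuous.comp (by fun_prop)))
    ζ hγ
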